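/- arXiv:2206.05753 — 2 statements merged into one kernel-verified Lean document; each statement's English description precedes it below -/
import Mathlib

section
/- Assume the gain conditions: λ_min(K_s) ≥ 1 + k_{n2}·(k_θ·N·λ_d·ρ̄₃)² + k_{n4}·ρ₃(t)² for all t ≥ 0, α₂·k·m₁ ≥ α₂ + k_{n2}·(k_θ·N·λ_d·ρ̄₃)² + k_{n3}·ρ₄(t)² + k_{n4}·ρ₃(t)² for all t ≥ 0, min{α₁, α₃} ≥ 1, k_{n2} > 1/(4·k_θ·λ̲), k_{n3} > 1/(4·min{α₁, α₂, α₃}) and k_{n4} ≥ 1/2. Then every solution of the closed-loop composite-adaptation output-feedback system is such that v(t) = (e(t), e_f(t), η(t), θ̃(t)) is bounded on [0,∞) and v(t) → 0 as t → ∞; in particular the tracking error e(t) and the parameter estimation error θ̃(t) converge to the origin. -/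
open Matrix Filter
open scoped BigOperators Topology

/-- Euclidean norm of a vector in `Fin m → ℝ`. -/
noncomputable def eunorm {m : ℕ} (v : Fin m → ℝ) : ℝ :=
  Real.sqrt (∑ i, (v i) ^ 2)

/-!
In terms of the information matrix `Q = P⁻¹` the least-squares update reads `Q' = Y_dfᵀ Y_df`, so
`Q` stays symmetric, is bounded below by `Q(0) > 0` and grows at most linearly. Along solutions, the
derivative of `V = (eᵀ K e + e_fᵀ K e_f + ηᵀ M η + θ̃ᵀ Q θ̃) / 2` loses the `Y_d` cross terms by
cancellation, the prediction-error feedback dominates `Q'`, and Young's inequality with the gain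
conditions absorbs the rest, so `V' ≤ -c ‖v‖²`. As `q ‖v‖² ≤ V ≤ (a + b t) ‖v‖²`, the product
`V (a + b t) ^ (c / b)` is nonincreasing: `V` stays bounded and decays at a polynomial rate.
-/

section Derivatives

lemma hasDerivAt_matrix {𝕜 ι κ : Type*} [NontriviallyNormedField 𝕜] [Finite ι] [Finite κ] {t : 𝕜}
    {A : 𝕜 → Matrix ι κ 𝕜} {A' : Matrix ι κ 𝕜} :
    HasDerivAt A A' t ↔ ∀ i j, HasDerivAt (fun s => A s i j) (A' i j) t := by
  have := Fintype.ofFinite ι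
  have := Fintype.ofFinite κ
  exact hasDerivAt_pi.trans (forall_congr' fun _ => hasDerivAt_pi)

variable {𝕜 ι κ : Type*} [NontriviallyNormedField 𝕜] [Fintype κ] {t : 𝕜}

lemma hasDerivAt_dotProduct {x y : 𝕜 → κ → 𝕜} {x' y' : κ → 𝕜}
    (hx : HasDerivAt x x' t) (hy : HasDerivAt y y' t) :
    HasDerivAt (fun s => x s ⬝ᵥ y s) (x' ⬝ᵥ y t + x t ⬝ᵥ y') t := by
  simp only [dotProduct, ← Finset.sum_add_distrib]
  exact HasDerivAt.fun_sum fun i _ => (hasDerivAt_pi.1 hx i).mul (hasDerivAt_pi.1 hy i)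

lemma hasDerivAt_mulVec [Finite ι] {A : 𝕜 → Matrix ι κ 𝕜} {A' : Matrix ι κ 𝕜}
    {x : 𝕜 → κ → 𝕜} {x' : κ → 𝕜} (hA : HasDerivAt A A' t) (hx : HasDerivAt x x' t) :
    HasDerivAt (fun s => A s *ᵥ x s) (A' *ᵥ x t + A t *ᵥ x') t := by
  have := Fintype.ofFinite ι
  exact hasDerivAt_pi.2 fun i => hasDerivAt_dotProduct (hasDerivAt_pi.1 hA i) hx

lemma hasDerivAt_dotProduct_mulVec_self {A : 𝕜 → Matrix κ κ 𝕜} {A' : Matrix κ κ 𝕜}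
    {x : 𝕜 → κ → 𝕜} {x' : κ → 𝕜} (hA : HasDerivAt A A' t) (hx : HasDerivAt x x' t)
    (hsymm : (A t).IsSymm) :
    HasDerivAt (fun s => x s ⬝ᵥ A s *ᵥ x s)
      (2 * (x t ⬝ᵥ A t *ᵥ x') + x t ⬝ᵥ A' *ᵥ x t) t := by
  refine (hasDerivAt_dotProduct hx (hasDerivAt_mulVec hA hx)).congr_deriv ?_
  have hswap : x' ⬝ᵥ A t *ᵥ x t = x t ⬝ᵥ A t *ᵥ x' := by
    rw [← dotProduct_transpose_mulVec, hsymm.eq]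
  rw [dotProduct_add, hswap]
  ring

open scoped Matrix.Norms.Operator in
lemma hasDerivAt_matrix_inv [DecidableEq κ] {t : ℝ} {A : ℝ → Matrix κ κ ℝ} {A' : Matrix κ κ ℝ}
    (hA : HasDerivAt A A' t) (hunit : IsUnit (A t)) :
    HasDerivAt (fun s => (A s)⁻¹) (-((A t)⁻¹ * A' * (A t)⁻¹)) t := by
  obtain ⟨u, hu⟩ := hunit
  have hinv := hasFDerivAt_ringInverse (𝕜 := ℝ) u
  rw [hu] at hinv
  simp only [nonsing_inv_eq_ringInverse, ← hu, Ring.inverse_unit]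
  exact hinv.comp_hasDerivAt t hA

lemma le_add_mul_of_hasDerivAt_le {f f' : ℝ → ℝ} {C : ℝ}
    (hf : ∀ t, 0 ≤ t → HasDerivAt f (f' t) t) (hC : ∀ t, 0 ≤ t → f' t ≤ C)
    {t : ℝ} (ht : 0 ≤ t) : f t ≤ f 0 + C * t := by
  have h := (convex_Ici (0 : ℝ)).image_sub_le_mul_sub_of_deriv_le
    (fun s hs => (hf s hs).continuousAt.continuousWithinAt)
    (fun s hs => (hf s (interior_subset hs)).differentiableAt.differentiableWithinAt)
    (fun s hs => (hf s (interior_subset hs)).deriv.trans_le (hC s (interior_subset hs)))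
    0 Set.self_mem_Ici t ht ht
  linarith

lemma le_of_hasDerivAt_nonpos {f f' : ℝ → ℝ} (hf : ∀ t, 0 ≤ t → HasDerivAt f (f' t) t)
    (hf' : ∀ t, 0 ≤ t → f' t ≤ 0) {t : ℝ} (ht : 0 ≤ t) : f t ≤ f 0 := by
  simpa only [zero_mul, add_zero] using le_add_mul_of_hasDerivAt_le hf hf' ht

end Derivatives

section EuclideanNorm

variable {m l : ℕ}

lemma eunorm_eq_norm (x : Fin m → ℝ) : eunorm x = ‖WithLp.toLp 2 x‖ := by
  simp [eunorm, EuclideanSpace.norm_eq]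

lemma eunorm_nonneg (x : Fin m → ℝ) : 0 ≤ eunorm x :=
  Real.sqrt_nonneg _

lemma eunorm_sq_eq_sum (x : Fin m → ℝ) : eunorm x ^ 2 = ∑ i, x i ^ 2 :=
  Real.sq_sqrt (Finset.sum_nonneg fun i _ => sq_nonneg (x i))

lemma eunorm_sq (x : Fin m → ℝ) : eunorm x ^ 2 = x ⬝ᵥ x := by
  rw [eunorm_sq_eq_sum]
  exact Finset.sum_congr rfl fun i _ => sq (x i)

lemma eunorm_neg (x : Fin m → ℝ) : eunorm (-x) = eunorm x := by
  simp only [eunorm, Pi.neg_apply, neg_sq]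

lemma dotProduct_le_eunorm_mul (x y : Fin m → ℝ) : x ⬝ᵥ y ≤ eunorm x * eunorm y := by
  simpa [eunorm_eq_norm, EuclideanSpace.inner_eq_star_dotProduct, dotProduct_comm] using
    real_inner_le_norm (WithLp.toLp 2 x) (WithLp.toLp 2 y)

open scoped Matrix.Norms.L2Operator in
lemma exists_nonneg_dotProduct_mulVec_self_le (A : Matrix (Fin m) (Fin m) ℝ) :
    ∃ L, 0 ≤ L ∧ ∀ x : Fin m → ℝ, x ⬝ᵥ A *ᵥ x ≤ L * eunorm x ^ 2 := by
  refine ⟨‖A‖, norm_nonneg A, fun x => ?_⟩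
  have hop : eunorm (A *ᵥ x) ≤ ‖A‖ * eunorm x := by
    rw [eunorm_eq_norm, eunorm_eq_norm]
    exact l2_opNorm_mulVec A (WithLp.toLp 2 x)
  calc x ⬝ᵥ A *ᵥ x ≤ eunorm x * eunorm (A *ᵥ x) := dotProduct_le_eunorm_mul _ _
    _ ≤ eunorm x * (‖A‖ * eunorm x) := mul_le_mul_of_nonneg_left hop (eunorm_nonneg x)
    _ = ‖A‖ * eunorm x ^ 2 := by ring

open scoped MatrixOrder Matrix.Norms.L2Operator in
lemma exists_pos_mul_eunorm_sq_le {A : Matrix (Fin m) (Fin m) ℝ} (hA : A.PosDef) :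
    ∃ q, 0 < q ∧ ∀ x : Fin m → ℝ, q * eunorm x ^ 2 ≤ x ⬝ᵥ A *ᵥ x := by
  cases isEmpty_or_nonempty (Fin m)
  · exact ⟨1, one_pos, fun x => by simp [eunorm]⟩
  obtain ⟨q, hq, hqA⟩ := (CFC.exists_pos_algebraMap_le_iff hA.1.isSelfAdjoint).2
    fun x hx => hA.isStrictlyPositive.spectrum_pos hx
  refine ⟨q, hq, fun x => ?_⟩
  have hx := (le_iff.1 hqA).dotProduct_mulVec_nonneg x
  rw [Algebra.algebraMap_eq_smul_one, sub_mulVec, smul_mulVec, one_mulVec, dotProduct_sub,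
    dotProduct_smul, smul_eq_mul, star_trivial, ← eunorm_sq, sub_nonneg] at hx
  exact hx

lemma exists_eunorm_mulVec_sq_le (c : ℝ) :
    ∃ b, 0 < b ∧ ∀ A : Matrix (Fin m) (Fin l) ℝ, (∀ i j, |A i j| ≤ c) →
      ∀ x, eunorm (A *ᵥ x) ^ 2 ≤ b * eunorm x ^ 2 := by
  refine ⟨m * (l * c ^ 2) + 1, by positivity, fun A hA x => ?_⟩
  have hentries (i : Fin m) : ∑ j, A i j ^ 2 ≤ l * c ^ 2 := by
    have hsq (j : Fin l) : A i j ^ 2 ≤ c ^ 2 :=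
      sq_le_sq' (abs_le.1 (hA i j)).1 (abs_le.1 (hA i j)).2
    simpa using Finset.sum_le_card_nsmul Finset.univ _ _ fun j _ => hsq j
  have hrow (i : Fin m) : (A *ᵥ x) i ^ 2 ≤ l * c ^ 2 * eunorm x ^ 2 := by
    rw [eunorm_sq_eq_sum x]
    exact (Finset.sum_mul_sq_le_sq_mul_sq Finset.univ (A i) x).trans
      (mul_le_mul_of_nonneg_right (hentries i) (Finset.sum_nonneg fun j _ => sq_nonneg (x j)))
  have hsum : eunorm (A *ᵥ x) ^ 2 ≤ m * (l * c ^ 2) * eunorm x ^ 2 := by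
    rw [eunorm_sq_eq_sum]
    simpa [mul_assoc] using Finset.sum_le_card_nsmul Finset.univ _ _ fun i _ => hrow i
  linarith [sq_nonneg (eunorm x)]

lemma iInf_mul_eunorm_sq_le_diagonal (d x : Fin m → ℝ) :
    (⨅ i, d i) * eunorm x ^ 2 ≤ x ⬝ᵥ diagonal d *ᵥ x := by
  simp only [eunorm_sq, dotProduct, mulVec_diagonal, Finset.mul_sum]
  refine Finset.sum_le_sum fun i _ => ?_
  nlinarith [ciInf_le (Set.finite_range d).bddBelow i, mul_self_nonneg (x i)]

end EuclideanNorm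

section InformationMatrix

lemma isSymm_of_hasDerivAt_isSymm {ι : Type*} [Finite ι] {Q W : ℝ → Matrix ι ι ℝ}
    (hQ : ∀ t, 0 ≤ t → HasDerivAt Q (W t) t) (hW : ∀ t, 0 ≤ t → (W t).IsSymm)
    (hQ0 : (Q 0).IsSymm) {t : ℝ} (ht : 0 ≤ t) : (Q t).IsSymm := by
  have hle (i j : ι) : Q t i j ≤ Q t j i := by
    have h := le_of_hasDerivAt_nonpos (f := fun s => Q s i j - Q s j i)
      (fun s hs => (hasDerivAt_matrix.1 (hQ s hs) i j).sub (hasDerivAt_matrix.1 (hQ s hs) j i))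
      (fun s hs => by rw [(hW s hs).apply j i, sub_self]) ht
    rwa [hQ0.apply j i, sub_self, sub_nonpos] at h
  exact IsSymm.ext fun i j => (hle j i).antisymm (hle i j)

variable {ι κ : Type*} [Fintype ι] [Fintype κ]

lemma dotProduct_transpose_mul_self_mulVec (Y : Matrix κ ι ℝ) (x : ι → ℝ) :
    x ⬝ᵥ (Yᵀ * Y) *ᵥ x = (Y *ᵥ x) ⬝ᵥ (Y *ᵥ x) := by
  rw [← mulVec_mulVec, dotProduct_transpose_mulVec]

lemma hasDerivAt_dotProduct_mulVec_const {Q : ℝ → Matrix ι ι ℝ} {W : Matrix ι ι ℝ} {t : ℝ}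
    (hQ : HasDerivAt Q W t) (x : ι → ℝ) :
    HasDerivAt (fun s => x ⬝ᵥ Q s *ᵥ x) (x ⬝ᵥ W *ᵥ x) t := by
  simpa only [zero_dotProduct, zero_add, mulVec_zero, add_zero] using
    hasDerivAt_dotProduct (hasDerivAt_const t x) (hasDerivAt_mulVec hQ (hasDerivAt_const t x))

lemma hasDerivAt_inv_of_riccati [DecidableEq ι] {P : ℝ → Matrix ι ι ℝ} {Y : Matrix κ ι ℝ} {t : ℝ}
    (hP : HasDerivAt P (-(P t * Yᵀ * Y * P t)) t) (hunit : IsUnit (P t)) :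
    HasDerivAt (fun s => (P s)⁻¹) (Yᵀ * Y) t := by
  have hdet : IsUnit (P t).det := (isUnit_iff_isUnit_det _).1 hunit
  have hinv := hasDerivAt_matrix_inv hP hunit
  rwa [mul_neg, neg_mul, neg_neg, Matrix.mul_assoc (P t), Matrix.mul_assoc (P t),
    nonsing_inv_mul_cancel_left _ _ hdet, mul_nonsing_inv_cancel_right _ _ hdet] at hinv

lemma isSymm_inv_of_riccati [DecidableEq ι] {P : ℝ → Matrix ι ι ℝ} {Y : ℝ → Matrix κ ι ℝ}
    (hP : ∀ t, 0 ≤ t → HasDerivAt P (-(P t * (Y t)ᵀ * Y t * P t)) t)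
    (hunit : ∀ t, 0 ≤ t → IsUnit (P t)) (hP0 : (P 0).IsSymm) {t : ℝ} (ht : 0 ≤ t) :
    (P t)⁻¹.IsSymm :=
  isSymm_of_hasDerivAt_isSymm (fun s hs => hasDerivAt_inv_of_riccati (hP s hs) (hunit s hs))
    (fun s _ => by rw [IsSymm, transpose_mul, transpose_transpose])
    (by rw [IsSymm, transpose_nonsing_inv, hP0.eq]) ht

lemma exists_bounds_inv_of_riccati {m l : ℕ} {P : ℝ → Matrix (Fin m) (Fin m) ℝ}
    {Y : ℝ → Matrix (Fin l) (Fin m) ℝ} {c : ℝ}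
    (hP : ∀ t, 0 ≤ t → HasDerivAt P (-(P t * (Y t)ᵀ * Y t * P t)) t)
    (hunit : ∀ t, 0 ≤ t → IsUnit (P t)) (hP0 : (P 0).PosDef)
    (hY : ∀ t, 0 ≤ t → ∀ i j, |Y t i j| ≤ c) :
    ∃ q a b, 0 < q ∧ 0 ≤ a ∧ 0 < b ∧ ∀ t, 0 ≤ t → ∀ x, q * eunorm x ^ 2 ≤ x ⬝ᵥ (P t)⁻¹ *ᵥ x ∧
      x ⬝ᵥ (P t)⁻¹ *ᵥ x ≤ (a + b * t) * eunorm x ^ 2 := by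
  obtain ⟨q, hq, hlower⟩ := exists_pos_mul_eunorm_sq_le hP0.inv
  obtain ⟨a, ha, hupper⟩ := exists_nonneg_dotProduct_mulVec_self_le (P 0)⁻¹
  obtain ⟨b, hb, hYb⟩ := exists_eunorm_mulVec_sq_le (m := l) (l := m) c
  have hderiv (x : Fin m → ℝ) (t : ℝ) (ht : 0 ≤ t) :
      HasDerivAt (fun s => x ⬝ᵥ (P s)⁻¹ *ᵥ x) (eunorm (Y t *ᵥ x) ^ 2) t := by
    rw [eunorm_sq, ← dotProduct_transpose_mul_self_mulVec]
    exact hasDerivAt_dotProduct_mulVec_const (hasDerivAt_inv_of_riccati (hP t ht) (hunit t ht)) x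
  refine ⟨q, a, b, hq, ha, hb, fun t ht x => ⟨(hlower x).trans ?_, ?_⟩⟩
  · exact neg_le_neg_iff.1 (le_of_hasDerivAt_nonpos (fun s hs => (hderiv x s hs).fun_neg)
      (fun s _ => neg_nonpos.2 (sq_nonneg _)) ht)
  · linarith [hupper x,
      le_add_mul_of_hasDerivAt_le (hderiv x) (fun s hs => hYb _ (hY s hs) x) ht]

end InformationMatrix

section Decay

open Real

lemma mul_rpow_le_of_hasDerivAt_le {V V' : ℝ → ℝ} {a b c : ℝ} (ha : 0 < a) (hb : 0 < b)
    (hV : ∀ t, 0 ≤ t → HasDerivAt V (V' t) t)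
    (hV' : ∀ t, 0 ≤ t → (a + b * t) * V' t + c * V t ≤ 0) {t : ℝ} (ht : 0 ≤ t) :
    V t * (a + b * t) ^ (c / b) ≤ V 0 * a ^ (c / b) := by
  have hpos (s : ℝ) (hs : 0 ≤ s) : 0 < a + b * s := by positivity
  have hderiv (s : ℝ) (hs : 0 ≤ s) : HasDerivAt (fun s => V s * (a + b * s) ^ (c / b))
      (((a + b * s) * V' s + c * V s) * (a + b * s) ^ (c / b - 1)) s := by
    have hline : HasDerivAt (fun s => a + b * s) b s := by
      simpa using ((hasDerivAt_id s).const_mul b).const_add a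
    refine ((hV s hs).mul (hline.rpow_const (p := c / b) (.inl (hpos s hs).ne'))).congr_deriv ?_
    rw [rpow_sub_one (hpos s hs).ne']
    have := (hpos s hs).ne'
    field_simp
  simpa using le_of_hasDerivAt_nonpos hderiv
    (fun s hs => mul_nonpos_of_nonpos_of_nonneg (hV' s hs) (rpow_nonneg (hpos s hs).le _)) ht

lemma tendsto_const_add_mul_rpow_neg {a b r : ℝ} (hb : 0 < b) (hr : 0 < r) :
    Tendsto (fun t => (a + b * t) ^ (-r)) atTop (𝓝 0) :=
  (tendsto_rpow_neg_atTop hr).comp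
    (tendsto_atTop_add_const_left _ a (tendsto_id.const_mul_atTop hb))

lemma bounded_and_tendsto_zero_of_lyapunov {V V' ν : ℝ → ℝ} {q a b c : ℝ}
    (hq : 0 < q) (ha : 0 < a) (hb : 0 < b) (hc : 0 < c) (hν : ∀ t, 0 ≤ ν t)
    (hV : ∀ t, 0 ≤ t → HasDerivAt V (V' t) t) (hV' : ∀ t, 0 ≤ t → V' t ≤ -(c * ν t ^ 2))
    (hlower : ∀ t, 0 ≤ t → q * ν t ^ 2 ≤ V t)
    (hupper : ∀ t, 0 ≤ t → V t ≤ (a + b * t) * ν t ^ 2) :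
    (∃ B, ∀ t, 0 ≤ t → ν t ≤ B) ∧ Tendsto ν atTop (𝓝 0) := by
  constructor
  · refine ⟨√(V 0 / q), fun t ht => le_sqrt_of_sq_le ((le_div_iff₀' hq).2 ?_)⟩
    exact (hlower t ht).trans (le_of_hasDerivAt_nonpos hV
      (fun s hs => (hV' s hs).trans (neg_nonpos.2 (by positivity))) ht)
  have hbound (t : ℝ) (ht : 0 ≤ t) :
      ν t ^ 2 ≤ V 0 * a ^ (c / b) / q * (a + b * t) ^ (-(c / b)) := by
    have hpos : 0 < a + b * t := by positivity
    have hdecay := mul_rpow_le_of_hasDerivAt_le (c := c) ha hb hV (fun s hs => by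
      have : 0 < a + b * s := by positivity
      nlinarith [hV' s hs, hupper s hs]) ht
    rw [rpow_neg hpos.le, ← div_eq_mul_inv, le_div_iff₀ (by positivity), le_div_iff₀ hq]
    calc ν t ^ 2 * (a + b * t) ^ (c / b) * q = q * ν t ^ 2 * (a + b * t) ^ (c / b) := by ring
      _ ≤ V t * (a + b * t) ^ (c / b) := by gcongr; exact hlower t ht
      _ ≤ V 0 * a ^ (c / b) := hdecay
  have hsq : Tendsto (fun t => ν t ^ 2) atTop (𝓝 0) :=
    squeeze_zero' (.of_forall fun t => sq_nonneg (ν t))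
      ((eventually_ge_atTop 0).mono hbound) (by
        simpa using (tendsto_const_add_mul_rpow_neg hb (div_pos hc hb)).const_mul
          (V 0 * a ^ (c / b) / q))
  simpa [sqrt_sq (hν _)] using hsq.sqrt

end Decay

section Energy

variable {n p : ℕ}

/-- The Euclidean norm of the stacked tracking error `z = (e, e_f, η)`. -/
noncomputable def zNorm (e ef η : Fin n → ℝ) : ℝ :=
  √(eunorm e ^ 2 + eunorm ef ^ 2 + eunorm η ^ 2)

/-- The Euclidean norm of the full state `v = (e, e_f, η, θ̃)`. -/
noncomputable def vNorm (e ef η : Fin n → ℝ) (θ : Fin p → ℝ) : ℝ :=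
  √(eunorm e ^ 2 + eunorm ef ^ 2 + eunorm η ^ 2 + eunorm θ ^ 2)

lemma zNorm_sq (e ef η : Fin n → ℝ) :
    zNorm e ef η ^ 2 = eunorm e ^ 2 + eunorm ef ^ 2 + eunorm η ^ 2 :=
  Real.sq_sqrt (by positivity)

lemma vNorm_sq (e ef η : Fin n → ℝ) (θ : Fin p → ℝ) :
    vNorm e ef η θ ^ 2 = zNorm e ef η ^ 2 + eunorm θ ^ 2 := by
  rw [zNorm_sq]
  exact Real.sq_sqrt (by positivity)

/-- The part of the Lyapunov function carried by the tracking errors: kinetic energy of `η` for the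
inertia `M`, and elastic energy of `e`, `e_f` for the gain `K`. -/
noncomputable def trackingEnergy (K M : Matrix (Fin n) (Fin n) ℝ) (e ef η : Fin n → ℝ) : ℝ :=
  (e ⬝ᵥ K *ᵥ e + ef ⬝ᵥ K *ᵥ ef + η ⬝ᵥ M *ᵥ η) / 2

/-- The part of the Lyapunov function carried by the parameter estimation error `θ`, weighted by
the information matrix `Q` (the inverse of the least-squares gain `P`). -/
noncomputable def parameterEnergy (Q : Matrix (Fin p) (Fin p) ℝ) (θ : Fin p → ℝ) : ℝ :=
  θ ⬝ᵥ Q *ᵥ θ / 2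

lemma mul_vNorm_sq_le_energy {K M : Matrix (Fin n) (Fin n) ℝ} {Q : Matrix (Fin p) (Fin p) ℝ}
    {κ m q : ℝ} (hK : ∀ x, κ * eunorm x ^ 2 ≤ x ⬝ᵥ K *ᵥ x)
    (hM : ∀ x, m * eunorm x ^ 2 ≤ x ⬝ᵥ M *ᵥ x) (hQ : ∀ x, q * eunorm x ^ 2 ≤ x ⬝ᵥ Q *ᵥ x)
    (e ef η : Fin n → ℝ) (θ : Fin p → ℝ) :
    min κ (min m q) / 2 * vNorm e ef η θ ^ 2
      ≤ trackingEnergy K M e ef η + parameterEnergy Q θ := by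
  rw [trackingEnergy, parameterEnergy, vNorm_sq, zNorm_sq]
  have hκ : min κ (min m q) ≤ κ := min_le_left _ _
  have hm : min κ (min m q) ≤ m := (min_le_right _ _).trans (min_le_left _ _)
  have hq : min κ (min m q) ≤ q := (min_le_right _ _).trans (min_le_right _ _)
  linarith [hK e, hK ef, hM η, hQ θ, mul_le_mul_of_nonneg_right hκ (sq_nonneg (eunorm e)),
    mul_le_mul_of_nonneg_right hκ (sq_nonneg (eunorm ef)),
    mul_le_mul_of_nonneg_right hm (sq_nonneg (eunorm η)),
    mul_le_mul_of_nonneg_right hq (sq_nonneg (eunorm θ))]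

lemma energy_le_mul_vNorm_sq {K M : Matrix (Fin n) (Fin n) ℝ} {Q : Matrix (Fin p) (Fin p) ℝ}
    {κ m q : ℝ} (hκ : 0 ≤ κ) (hm : 0 ≤ m) (hq : 0 ≤ q)
    (hK : ∀ x, x ⬝ᵥ K *ᵥ x ≤ κ * eunorm x ^ 2) (hM : ∀ x, x ⬝ᵥ M *ᵥ x ≤ m * eunorm x ^ 2)
    (hQ : ∀ x, x ⬝ᵥ Q *ᵥ x ≤ q * eunorm x ^ 2) (e ef η : Fin n → ℝ) (θ : Fin p → ℝ) :
    trackingEnergy K M e ef η + parameterEnergy Q θ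
      ≤ (κ + m + q) / 2 * vNorm e ef η θ ^ 2 := by
  rw [trackingEnergy, parameterEnergy, vNorm_sq, zNorm_sq]
  nlinarith [hK e, hK ef, hM η, hQ θ, sq_nonneg (eunorm e), sq_nonneg (eunorm ef),
    sq_nonneg (eunorm η), sq_nonneg (eunorm θ)]

lemma hasDerivAt_trackingEnergy {α₁ α₂ α₃ k t : ℝ} {K M' C : Matrix (Fin n) (Fin n) ℝ}
    {M : ℝ → Matrix (Fin n) (Fin n) ℝ} {e ef η : ℝ → Fin n → ℝ} {η' f : Fin n → ℝ}
    (hK : K.IsSymm) (hM : HasDerivAt M M' t) (hMsymm : (M t).IsSymm)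
    (he : HasDerivAt e (η t - α₁ • e t - α₂ • ef t) t)
    (hef : HasDerivAt ef (-α₃ • ef t + α₂ • e t - k • η t) t) (hη : HasDerivAt η η' t)
    (hηdyn : M t *ᵥ η' =
      -(C *ᵥ η t) - (α₂ * k) • (M t *ᵥ η t) + f + k • (K *ᵥ ef t) - K *ᵥ e t)
    (hskew : η t ⬝ᵥ (M' - (2 : ℝ) • C) *ᵥ η t = 0) :
    HasDerivAt (fun s => trackingEnergy K (M s) (e s) (ef s) (η s))
      (-(α₁ * (e t ⬝ᵥ K *ᵥ e t)) - α₃ * (ef t ⬝ᵥ K *ᵥ ef t) - α₂ * k * (η t ⬝ᵥ M t *ᵥ η t)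
        + η t ⬝ᵥ f) t := by
  have hKconst : HasDerivAt (fun _ : ℝ => K) 0 t :=
    hasDerivAt_matrix.2 fun i j => hasDerivAt_const t (K i j)
  refine ((((hasDerivAt_dotProduct_mulVec_self hKconst he hK).add
    (hasDerivAt_dotProduct_mulVec_self hKconst hef hK)).add
    (hasDerivAt_dotProduct_mulVec_self hM hη hMsymm)).div_const 2).congr_deriv ?_
  have hKswap (x y : Fin n → ℝ) : x ⬝ᵥ K *ᵥ y = y ⬝ᵥ K *ᵥ x := by
    rw [← dotProduct_transpose_mulVec, hK.eq]
  rw [sub_mulVec, smul_mulVec, dotProduct_sub, dotProduct_smul, smul_eq_mul] at hskew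
  simp only [hηdyn, mulVec_add, mulVec_sub, mulVec_smul, zero_mulVec, dotProduct_add,
    dotProduct_sub, dotProduct_neg, dotProduct_smul, dotProduct_zero, smul_eq_mul]
  rw [hKswap (e t) (η t), hKswap (ef t) (η t), hKswap (ef t) (e t)]
  linarith

lemma hasDerivAt_parameterEnergy {kθ t : ℝ} {P : ℝ → Matrix (Fin p) (Fin p) ℝ}
    {S : Matrix (Fin p) (Fin p) ℝ} {Y Yf : Matrix (Fin n) (Fin p) ℝ} {θ : ℝ → Fin p → ℝ}
    {d : Fin p → ℝ} {η w : Fin n → ℝ} (hP : HasDerivAt P (-(P t * Yfᵀ * Yf * P t)) t)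
    (hunit : IsUnit (P t)) (hsymm : (P t)⁻¹.IsSymm)
    (hθ : HasDerivAt θ (-(P t *ᵥ (Yfᵀ *ᵥ (w + Yf *ᵥ θ t))) - P t *ᵥ (Yᵀ *ᵥ η)
      - kθ • (P t *ᵥ d) - kθ • (P t *ᵥ (S *ᵥ θ t))) t) :
    HasDerivAt (fun s => parameterEnergy (P s)⁻¹ (θ s))
      (-((Yf *ᵥ θ t) ⬝ᵥ w) - eunorm (Yf *ᵥ θ t) ^ 2 / 2 - η ⬝ᵥ Y *ᵥ θ t - kθ * (θ t ⬝ᵥ d)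
        - kθ * (θ t ⬝ᵥ S *ᵥ θ t)) t := by
  refine ((hasDerivAt_dotProduct_mulVec_self (hasDerivAt_inv_of_riccati hP hunit) hθ
    hsymm).div_const 2).congr_deriv ?_
  have hcancel (x : Fin p → ℝ) : (P t)⁻¹ *ᵥ (P t *ᵥ x) = x := by
    rw [mulVec_mulVec, nonsing_inv_mul _ ((isUnit_iff_isUnit_det _).1 hunit), one_mulVec]
  have hadjoint (A : Matrix (Fin n) (Fin p) ℝ) (x : Fin n → ℝ) :
      θ t ⬝ᵥ Aᵀ *ᵥ x = (A *ᵥ θ t) ⬝ᵥ x := by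
    rw [dotProduct_transpose_mulVec, dotProduct_comm]
  rw [dotProduct_transpose_mul_self_mulVec, eunorm_sq, dotProduct_comm η]
  simp only [mulVec_sub, mulVec_neg, mulVec_smul, hcancel, dotProduct_sub, dotProduct_neg,
    dotProduct_smul, smul_eq_mul, hadjoint, dotProduct_add]
  ring

end Energy

section Dissipation

lemma mul_le_mul_sq_add_sq_div {k : ℝ} (hk : 0 < k) (x y : ℝ) :
    x * y ≤ k * x ^ 2 + y ^ 2 / (4 * k) := by
  have h : k * x ^ 2 + y ^ 2 / (4 * k) - x * y = (2 * k * x - y) ^ 2 / (4 * k) := by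
    field_simp
    ring
  linarith [div_nonneg (sq_nonneg (2 * k * x - y)) (by positivity : 0 ≤ 4 * k)]

lemma min_mul_add_le {a b x y : ℝ} (hx : 0 ≤ x) (hy : 0 ≤ y) :
    min a b * (x + y) ≤ a * x + b * y := by
  rw [mul_add]
  exact add_le_add (mul_le_mul_of_nonneg_right (min_le_left a b) hx)
    (mul_le_mul_of_nonneg_right (min_le_right a b) hy)

lemma pos_and_one_div_four_mul_lt {a b : ℝ} (ha : 0 < a) (h : 1 / (4 * a) < b) :
    0 < b ∧ 1 / (4 * b) < a := by
  have hb : 0 < b := (by positivity : 0 < 1 / (4 * a)).trans h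
  rw [div_lt_iff₀ (by positivity)] at h
  exact ⟨hb, (div_lt_iff₀ (by positivity)).2 (by linarith)⟩

variable {n p : ℕ}

lemma tracking_dissipation_le {α₁ α₂ α₃ k κ m₁ kn3 g r : ℝ} {K M : Matrix (Fin n) (Fin n) ℝ}
    {e ef η χ : Fin n → ℝ} (hα₁ : 1 ≤ α₁) (hα₃ : 1 ≤ α₃) (hα₂k : 0 ≤ α₂ * k) (hkn3 : 0 < kn3)
    (hg : 0 ≤ g) (hK : ∀ x, κ * eunorm x ^ 2 ≤ x ⬝ᵥ K *ᵥ x) (hM : m₁ * eunorm η ^ 2 ≤ η ⬝ᵥ M *ᵥ η)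
    (hχ : eunorm χ ≤ r * zNorm e ef η) (hκ : 1 + g ≤ κ)
    (hm₁ : α₂ + g + kn3 * r ^ 2 ≤ α₂ * k * m₁) :
    -(α₁ * (e ⬝ᵥ K *ᵥ e)) - α₃ * (ef ⬝ᵥ K *ᵥ ef) - α₂ * k * (η ⬝ᵥ M *ᵥ η) + η ⬝ᵥ χ
      ≤ (1 / (4 * kn3) - min α₁ (min α₂ α₃) - g) * zNorm e ef η ^ 2 := by
  set μ := min α₁ (min α₂ α₃) with hμ
  have hstiff {α : ℝ} (hα : 1 ≤ α) (hμα : μ ≤ α) (x : Fin n → ℝ) :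
      (μ + g) * eunorm x ^ 2 ≤ α * (x ⬝ᵥ K *ᵥ x) := calc
    (μ + g) * eunorm x ^ 2 ≤ α * κ * eunorm x ^ 2 := by gcongr; nlinarith
    _ = α * (κ * eunorm x ^ 2) := mul_assoc _ _ _
    _ ≤ α * (x ⬝ᵥ K *ᵥ x) := by gcongr; exact hK x
  have hdamp : (μ + g + kn3 * r ^ 2) * eunorm η ^ 2 ≤ α₂ * k * (η ⬝ᵥ M *ᵥ η) := calc
    (μ + g + kn3 * r ^ 2) * eunorm η ^ 2 ≤ α₂ * k * m₁ * eunorm η ^ 2 := by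
      have : μ ≤ α₂ := (min_le_right _ _).trans (min_le_left _ _)
      gcongr
      linarith
    _ = α₂ * k * (m₁ * eunorm η ^ 2) := mul_assoc _ _ _
    _ ≤ α₂ * k * (η ⬝ᵥ M *ᵥ η) := by gcongr
  have hcross : η ⬝ᵥ χ ≤ kn3 * r ^ 2 * eunorm η ^ 2 + zNorm e ef η ^ 2 / (4 * kn3) := calc
    η ⬝ᵥ χ ≤ eunorm η * eunorm χ := dotProduct_le_eunorm_mul _ _
    _ ≤ eunorm η * (r * zNorm e ef η) := mul_le_mul_of_nonneg_left hχ (eunorm_nonneg η)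
    _ = r * eunorm η * zNorm e ef η := by ring
    _ ≤ kn3 * (r * eunorm η) ^ 2 + zNorm e ef η ^ 2 / (4 * kn3) := mul_le_mul_sq_add_sq_div hkn3 _ _
    _ = _ := by ring
  have he := hstiff hα₁ (min_le_left _ _) e
  have hef := hstiff hα₃ ((min_le_right _ _).trans (min_le_right _ _)) ef
  calc _ ≤ zNorm e ef η ^ 2 / (4 * kn3)
        - (μ + g) * (eunorm e ^ 2 + eunorm ef ^ 2 + eunorm η ^ 2) := by linarith
    _ = _ := by rw [← zNorm_sq]; ring

lemma parameter_dissipation_le {kθ kn2 kn4 lam L r z : ℝ} {S : Matrix (Fin p) (Fin p) ℝ}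
    {θ d : Fin p → ℝ} {y w : Fin n → ℝ} (hkθ : 0 ≤ kθ) (hkn2 : 0 < kn2) (hkn4 : 1 / 2 ≤ kn4)
    (hS : lam * eunorm θ ^ 2 ≤ θ ⬝ᵥ S *ᵥ θ) (hd : eunorm d ≤ L * z) (hw : eunorm w ≤ r * z) :
    -(y ⬝ᵥ w) - eunorm y ^ 2 / 2 - kθ * (θ ⬝ᵥ d) - kθ * (θ ⬝ᵥ S *ᵥ θ)
      ≤ (kn2 * (kθ * L) ^ 2 + kn4 * r ^ 2) * z ^ 2
        + (1 / (4 * kn2) - kθ * lam) * eunorm θ ^ 2 := by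
  have hprediction : -(y ⬝ᵥ w) ≤ eunorm y ^ 2 / 2 + kn4 * r ^ 2 * z ^ 2 := calc
    -(y ⬝ᵥ w) ≤ eunorm y * eunorm w := by
      rw [← neg_dotProduct, ← eunorm_neg y]
      exact dotProduct_le_eunorm_mul _ _
    _ ≤ eunorm y ^ 2 / 2 + 1 / 2 * eunorm w ^ 2 := by nlinarith [sq_nonneg (eunorm y - eunorm w)]
    _ ≤ eunorm y ^ 2 / 2 + kn4 * (r * z) ^ 2 := by
      gcongr
      exact eunorm_nonneg w
    _ = _ := by ring
  have hstack : -(kθ * (θ ⬝ᵥ d)) ≤ kn2 * (kθ * L) ^ 2 * z ^ 2 + eunorm θ ^ 2 / (4 * kn2) := calc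
    -(kθ * (θ ⬝ᵥ d)) = kθ * (-θ ⬝ᵥ d) := by rw [neg_dotProduct, mul_neg]
    _ ≤ kθ * (eunorm θ * (L * z)) := by
      gcongr
      rw [← eunorm_neg θ]
      exact (dotProduct_le_eunorm_mul _ _).trans (mul_le_mul_of_nonneg_left hd (eunorm_nonneg _))
    _ = kθ * L * z * eunorm θ := by ring
    _ ≤ kn2 * (kθ * L * z) ^ 2 + eunorm θ ^ 2 / (4 * kn2) := mul_le_mul_sq_add_sq_div hkn2 _ _
    _ = _ := by ring
  calc _ ≤ kn4 * r ^ 2 * z ^ 2 + (kn2 * (kθ * L) ^ 2 * z ^ 2 + eunorm θ ^ 2 / (4 * kn2))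
        - kθ * (lam * eunorm θ ^ 2) := by linarith [mul_le_mul_of_nonneg_left hS hkθ]
    _ = _ := by ring

end Dissipation

theorem ofb_composite_concurrent_learning_asymptotic_convergence_general {n p : ℕ}
    {α₁ α₂ α₃ k kθ κ m₁ m₂ lam L c kn2 kn3 kn4 : ℝ} {K : Matrix (Fin n) (Fin n) ℝ}
    {M M' C : ℝ → Matrix (Fin n) (Fin n) ℝ} {Yd Ydf : ℝ → Matrix (Fin n) (Fin p) ℝ}
    {P S : ℝ → Matrix (Fin p) (Fin p) ℝ} {e ef η η' χ Ωf : ℝ → Fin n → ℝ} {θ d : ℝ → Fin p → ℝ}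
    {ρ₃ ρ₄ : ℝ → ℝ} (hα₁ : 1 ≤ α₁) (hα₂ : 0 < α₂) (hα₃ : 1 ≤ α₃) (hk : 0 < k) (hkθ : 0 < kθ)
    (hm₁ : 0 < m₁) (hm₁₂ : m₁ ≤ m₂) (hlam : 0 < lam) (hkn2 : 1 / (4 * kθ * lam) < kn2)
    (hkn3 : 1 / (4 * min α₁ (min α₂ α₃)) < kn3) (hkn4 : 1 / 2 ≤ kn4)
    (hK : K.IsSymm) (hKlower : ∀ x, κ * eunorm x ^ 2 ≤ x ⬝ᵥ K *ᵥ x)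
    (hM : ∀ t, 0 ≤ t → HasDerivAt M (M' t) t) (hMsymm : ∀ t, 0 ≤ t → (M t).IsSymm)
    (hMlower : ∀ t, 0 ≤ t → ∀ x, m₁ * eunorm x ^ 2 ≤ x ⬝ᵥ M t *ᵥ x)
    (hMupper : ∀ t, 0 ≤ t → ∀ x, x ⬝ᵥ M t *ᵥ x ≤ m₂ * eunorm x ^ 2)
    (hskew : ∀ t, 0 ≤ t → ∀ x, x ⬝ᵥ (M' t - (2 : ℝ) • C t) *ᵥ x = 0)
    (hYdf : ∀ t, 0 ≤ t → ∀ i j, |Ydf t i j| ≤ c)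
    (hP : ∀ t, 0 ≤ t → HasDerivAt P (-(P t * (Ydf t)ᵀ * Ydf t * P t)) t)
    (hP0 : (P 0).PosDef) (hPunit : ∀ t, 0 ≤ t → IsUnit (P t))
    (hS : ∀ t, 0 ≤ t → ∀ x, lam * eunorm x ^ 2 ≤ x ⬝ᵥ S t *ᵥ x)
    (hχ : ∀ t, 0 ≤ t → eunorm (χ t) ≤ ρ₄ t * zNorm (e t) (ef t) (η t))
    (hΩf : ∀ t, 0 ≤ t → eunorm (Ωf t) ≤ ρ₃ t * zNorm (e t) (ef t) (η t))
    (hd : ∀ t, 0 ≤ t → eunorm (d t) ≤ L * zNorm (e t) (ef t) (η t))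
    (he : ∀ t, 0 ≤ t → HasDerivAt e (η t - α₁ • e t - α₂ • ef t) t)
    (hef : ∀ t, 0 ≤ t → HasDerivAt ef (-α₃ • ef t + α₂ • e t - k • η t) t)
    (hη : ∀ t, 0 ≤ t → HasDerivAt η (η' t) t)
    (hηdyn : ∀ t, 0 ≤ t → M t *ᵥ η' t =
      -(C t *ᵥ η t) - (α₂ * k) • (M t *ᵥ η t) + Yd t *ᵥ θ t + χ t + k • (K *ᵥ ef t) - K *ᵥ e t)
    (hθ : ∀ t, 0 ≤ t → HasDerivAt θ
      (-(P t *ᵥ ((Ydf t)ᵀ *ᵥ (Ωf t + Ydf t *ᵥ θ t))) - P t *ᵥ ((Yd t)ᵀ *ᵥ η t)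
        - kθ • (P t *ᵥ d t) - kθ • (P t *ᵥ (S t *ᵥ θ t))) t)
    (hgainK : ∀ t, 0 ≤ t → 1 + kn2 * (kθ * L) ^ 2 + kn4 * ρ₃ t ^ 2 ≤ κ)
    (hgaink : ∀ t, 0 ≤ t →
      α₂ + kn2 * (kθ * L) ^ 2 + kn3 * ρ₄ t ^ 2 + kn4 * ρ₃ t ^ 2 ≤ α₂ * k * m₁) :
    (∃ B, ∀ t, 0 ≤ t → vNorm (e t) (ef t) (η t) (θ t) ≤ B) ∧
      Tendsto (fun t => vNorm (e t) (ef t) (η t) (θ t)) atTop (𝓝 0) := by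
  have hμ : 0 < min α₁ (min α₂ α₃) := lt_min (by linarith) (lt_min hα₂ (by linarith))
  obtain ⟨hkn3_pos, hz_rate⟩ := pos_and_one_div_four_mul_lt hμ hkn3
  obtain ⟨hkn2_pos, hθ_rate⟩ :=
    pos_and_one_div_four_mul_lt (mul_pos hkθ hlam) (by rwa [← mul_assoc])
  have hcross_nonneg (t : ℝ) : 0 ≤ kn2 * (kθ * L) ^ 2 + kn4 * ρ₃ t ^ 2 := by
    have : 0 ≤ kn4 := by linarith
    positivity
  have hκ : 0 < κ := by linarith [hcross_nonneg 0, hgainK 0 le_rfl]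
  obtain ⟨q, a, b, hq, ha, hb, hQ⟩ := exists_bounds_inv_of_riccati hP hPunit hP0 hYdf
  obtain ⟨l, hl, hKupper⟩ := exists_nonneg_dotProduct_mulVec_self_le K
  have hderiv (t : ℝ) (ht : 0 ≤ t) :=
    (hasDerivAt_trackingEnergy (f := Yd t *ᵥ θ t + χ t) hK (hM t ht) (hMsymm t ht) (he t ht)
      (hef t ht) (hη t ht) (by rw [hηdyn t ht, add_assoc (_ - _)]) (hskew t ht (η t))).fun_add
    (hasDerivAt_parameterEnergy (hP t ht) (hPunit t ht)
      (isSymm_inv_of_riccati hP hPunit hP0.isHermitian ht) (hθ t ht))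
  have hlower (t : ℝ) (ht : 0 ≤ t) := mul_vNorm_sq_le_energy hKlower (hMlower t ht)
    (fun x => (hQ t ht x).1) (e t) (ef t) (η t) (θ t)
  have hupper (t : ℝ) (ht : 0 ≤ t) := energy_le_mul_vNorm_sq hl (hm₁.le.trans hm₁₂)
    (by positivity) hKupper (hMupper t ht) (fun x => (hQ t ht x).2) (e t) (ef t) (η t) (θ t)
  refine bounded_and_tendsto_zero_of_lyapunov (a := (l + m₂ + a) / 2) (b := b / 2)
    (half_pos (lt_min hκ (lt_min hm₁ hq))) (by linarith) (half_pos hb)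
    (lt_min (sub_pos.2 hz_rate) (sub_pos.2 hθ_rate)) (fun t => Real.sqrt_nonneg _)
    hderiv (fun t ht => ?_) hlower (fun t ht => (hupper t ht).trans_eq (by ring))
  have htracking := tracking_dissipation_le hα₁ hα₃ (mul_pos hα₂ hk).le hkn3_pos
    (hcross_nonneg t) hKlower (hMlower t ht (η t)) (hχ t ht)
    (by linarith [hgainK t ht]) (by linarith [hgaink t ht])
  have hparameter := parameter_dissipation_le (y := Ydf t *ᵥ θ t) hkθ.le hkn2_pos hkn4
    (hS t ht (θ t)) (hd t ht) (hΩf t ht)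
  rw [dotProduct_add, vNorm_sq]
  linarith [min_mul_add_le (a := min α₁ (min α₂ α₃) - 1 / (4 * kn3))
    (b := kθ * lam - 1 / (4 * kn2)) (sq_nonneg (zNorm (e t) (ef t) (η t)))
    (sq_nonneg (eunorm (θ t)))]

/-- Theorem 3, output-feedback composite adaptation based
concurrent learning. Under the stated gain conditions, every solution of the
closed-loop composite-adaptation output-feedback system is such that
`v = (e, e_f, η, θ̃)` is bounded on `[0, ∞)` and `v(t) → 0` as `t → ∞`; in
particular the tracking error `e` and the parameter estimation error `θ̃`
converge to the origin. -/
theorem ofb_composite_concurrent_learning_asymptotic_convergence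
    {n p N : ℕ} [NeZero n] [NeZero p]
    -- constants
    (α₁ α₂ α₃ k kθ m₁ m₂ lam lamd ρbar₃ kn2 kn3 kn4 : ℝ)
    (hα₁ : 0 < α₁) (hα₂ : 0 < α₂) (hα₃ : 0 < α₃) (hk : 0 < k)
    (hkθ : 0 < kθ) (hm₁ : 0 < m₁) (hm₁₂ : m₁ ≤ m₂)
    (hlam : 0 < lam) (hlamd : 0 ≤ lamd) (hρbar₃ : 0 ≤ ρbar₃)
    (hkn2 : 0 < kn2) (hkn3 : 0 < kn3) (hkn4 : 0 < kn4)
    -- diagonal positive definite gain matrix `Ks = diagonal ks`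
    (ks : Fin n → ℝ) (hks : ∀ i, 0 < ks i)
    -- state error signals and their derivatives
    (e ef η e' ef' η' : ℝ → Fin n → ℝ)
    (θtil θtil' : ℝ → Fin p → ℝ)
    (he : ∀ t, 0 ≤ t → HasDerivAt e (e' t) t)
    (hef : ∀ t, 0 ≤ t → HasDerivAt ef (ef' t) t)
    (hη : ∀ t, 0 ≤ t → HasDerivAt η (η' t) t)
    (hθ : ∀ t, 0 ≤ t → HasDerivAt θtil (θtil' t) t)
    -- surrogate filter relations: ė = η - α₁ e - α₂ e_f, ė_f = -α₃ e_f + α₂ e - k η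
    (hedyn : ∀ t, 0 ≤ t → e' t = η t - α₁ • e t - α₂ • ef t)
    (hefdyn : ∀ t, 0 ≤ t → ef' t = -α₃ • ef t + α₂ • e t - k • η t)
    -- inertia matrix, its derivative, and centripetal-Coriolis matrix
    (M M' C : ℝ → Matrix (Fin n) (Fin n) ℝ)
    (hM : ∀ t, 0 ≤ t → ∀ i j, HasDerivAt (fun s => M s i j) (M' t i j) t)
    (hMsymm : ∀ t, 0 ≤ t → (M t).IsHermitian)
    (hMlower : ∀ t, 0 ≤ t → ∀ ξ : Fin n → ℝ,
      m₁ * (eunorm ξ) ^ 2 ≤ ξ ⬝ᵥ (M t).mulVec ξ)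
    (hMupper : ∀ t, 0 ≤ t → ∀ ξ : Fin n → ℝ,
      ξ ⬝ᵥ (M t).mulVec ξ ≤ m₂ * (eunorm ξ) ^ 2)
    -- skew-symmetry property: ξᵀ(Ṁ - 2C)ξ = 0
    (hskew : ∀ t, 0 ≤ t → ∀ ξ : Fin n → ℝ,
      ξ ⬝ᵥ (M' t - (2 : ℝ) • C t).mulVec ξ = 0)
    -- regression matrices: continuous and bounded
    (Yd Ydf : ℝ → Matrix (Fin n) (Fin p) ℝ)
    (hYd : Continuous Yd) (hYdf : Continuous Ydf)
    (hYdbd : ∃ c : ℝ, ∀ t, 0 ≤ t → ∀ i j, |Yd t i j| ≤ c)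
    (hYdfbd : ∃ c : ℝ, ∀ t, 0 ≤ t → ∀ i j, |Ydf t i j| ≤ c)
    -- auxiliary terms χ, Ω and their bounds w.r.t. ‖z‖, z = (e, e_f, η),
    -- with bounded nonnegative functions ρ₃, ρ₄
    (χ Ωf : ℝ → Fin n → ℝ) (ρ₃ ρ₄ : ℝ → ℝ)
    (hρ₃ : ∀ t, 0 ≤ ρ₃ t) (hρ₄ : ∀ t, 0 ≤ ρ₄ t)
    (hρ₃bd : ∃ c : ℝ, ∀ t, 0 ≤ t → ρ₃ t ≤ c)
    (hρ₄bd : ∃ c : ℝ, ∀ t, 0 ≤ t → ρ₄ t ≤ c)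
    (hχ : ∀ t, 0 ≤ t → eunorm (χ t) ≤
      ρ₄ t * Real.sqrt ((eunorm (e t)) ^ 2 + (eunorm (ef t)) ^ 2 + (eunorm (η t)) ^ 2))
    (hΩf : ∀ t, 0 ≤ t → eunorm (Ωf t) ≤
      ρ₃ t * Real.sqrt ((eunorm (e t)) ^ 2 + (eunorm (ef t)) ^ 2 + (eunorm (η t)) ^ 2))
    -- prediction error ε = Ω + Y_{df} θ̃
    (ε : ℝ → Fin n → ℝ)
    (hε : ∀ t, ε t = Ωf t + (Ydf t).mulVec (θtil t))
    -- concurrent-learning data stack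
    (𝒴 : Fin N → Matrix (Fin n) (Fin p) ℝ)
    (Ω : Fin N → ℝ → Fin n → ℝ)
    (hΩ : ∀ t, 0 ≤ t →
      eunorm (∑ i, ((𝒴 i)ᵀ).mulVec (Ω i t)) ≤ (N : ℝ) * lamd * ρbar₃ *
        Real.sqrt ((eunorm (e t)) ^ 2 + (eunorm (ef t)) ^ 2 + (eunorm (η t)) ^ 2))
    -- λmin(Σᵢ 𝒴ᵢᵀ 𝒴ᵢ) ≥ λ̲ > 0
    (hstack : ∀ ξ : Fin p → ℝ,
      lam * (eunorm ξ) ^ 2 ≤ ξ ⬝ᵥ (∑ i, (𝒴 i)ᵀ * 𝒴 i).mulVec ξ)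
    -- time-varying least-squares gain matrix P with Ṗ = -P Y_{df}ᵀ Y_{df} P
    (P : ℝ → Matrix (Fin p) (Fin p) ℝ)
    (hP : ∀ t, 0 ≤ t → ∀ i j, HasDerivAt (fun s => P s i j)
      ((-(P t * (Ydf t)ᵀ * Ydf t * P t)) i j) t)
    (hP0 : (P 0).PosDef)
    (hPinv : ∀ t, 0 ≤ t → IsUnit (P t))
    -- closed-loop dynamics: M η̇ = -C η - α₂ k M η + Y_d θ̃ + χ + k Ks e_f - Ks e
    (hηdyn : ∀ t, 0 ≤ t → (M t).mulVec (η' t) =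
      -((C t).mulVec (η t)) - (α₂ * k) • ((M t).mulVec (η t))
        + (Yd t).mulVec (θtil t) + χ t
        + k • ((Matrix.diagonal ks).mulVec (ef t))
        - (Matrix.diagonal ks).mulVec (e t))
    -- composite parameter-estimation-error dynamics
    (hθdyn : ∀ t, 0 ≤ t → θtil' t =
      -((P t).mulVec (((Ydf t)ᵀ).mulVec (ε t)))
        - (P t).mulVec (((Yd t)ᵀ).mulVec (η t))
        - kθ • ((P t).mulVec (∑ i, ((𝒴 i)ᵀ).mulVec (Ω i t)))
        - kθ • ((P t).mulVec ((∑ i, (𝒴 i)ᵀ * 𝒴 i).mulVec (θtil t))))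
    -- gain conditions
    (hgainKs : ∀ t, 0 ≤ t →
      (⨅ i, ks i) ≥ 1 + kn2 * (kθ * (N : ℝ) * lamd * ρbar₃) ^ 2 + kn4 * (ρ₃ t) ^ 2)
    (hgaink : ∀ t, 0 ≤ t → α₂ * k * m₁ ≥
      α₂ + kn2 * (kθ * (N : ℝ) * lamd * ρbar₃) ^ 2 + kn3 * (ρ₄ t) ^ 2 + kn4 * (ρ₃ t) ^ 2)
    (hα₁₃ : min α₁ α₃ ≥ 1)
    (hgain2 : kn2 > 1 / (4 * kθ * lam))
    (hgain3 : kn3 > 1 / (4 * min α₁ (min α₂ α₃)))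
    (hgain4 : kn4 ≥ 1 / 2) :
    -- v = (e, e_f, η, θ̃) is bounded on [0, ∞) and converges to the origin
    (∃ B : ℝ, ∀ t, 0 ≤ t →
      Real.sqrt ((eunorm (e t)) ^ 2 + (eunorm (ef t)) ^ 2 + (eunorm (η t)) ^ 2 +
        (eunorm (θtil t)) ^ 2) ≤ B) ∧
    Tendsto (fun t => Real.sqrt ((eunorm (e t)) ^ 2 + (eunorm (ef t)) ^ 2 +
      (eunorm (η t)) ^ 2 + (eunorm (θtil t)) ^ 2)) atTop (𝓝 0) := by
  obtain ⟨c, hc⟩ := hYdfbd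
  obtain ⟨hα₁_one, hα₃_one⟩ := le_min_iff.1 hα₁₃
  exact ofb_composite_concurrent_learning_asymptotic_convergence_general hα₁_one hα₂ hα₃_one hk hkθ
    hm₁ hm₁₂ hlam hgain2 hgain3 hgain4 (isSymm_diagonal ks) (iInf_mul_eunorm_sq_le_diagonal ks)
    (fun t ht => hasDerivAt_matrix.2 (hM t ht)) hMsymm hMlower hMupper hskew hc
    (fun t ht => hasDerivAt_matrix.2 (hP t ht)) hP0 hPinv (fun _ _ => hstack) hχ hΩf hΩ
    (fun t ht => hedyn t ht ▸ he t ht) (fun t ht => hefdyn t ht ▸ hef t ht) hη hηdyn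
    (fun t ht => hε t ▸ hθdyn t ht ▸ hθ t ht)
    (by simpa only [mul_assoc] using hgainKs) (by simpa only [mul_assoc] using hgaink)
end

section
/- (Appendix Lemma, output-feedback version.) If additionally e_f, η : [0,∞) → ℝⁿ are continuous functions such that ė(t) = η(t) − α₁·e(t) − α₂·e_f(t) for constants α₁, α₂ > 0, and z(t) = (e(t), e_f(t), η(t)), then there exist nonnegative constants ξ₄, ξ₅, depending only on β, α₁, α₂ and the bounding constants m₂, ζ_{M1}, ζ_{C1}, ζ_{C2}, ζ_G, ζ_F, ζ_{d1}, such that for every t ≥ 0: ‖Ω(t)‖ ≤ ξ₄·Z(t) + ξ₅·Z(t)², where Z(t) = sup_{0≤σ≤t} ‖z(σ)‖. -/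
open Matrix
open scoped BigOperators

/-!
Since `Ṁ = C + Cᵀ`, the integrand `g` is the increment, from the desired to the actual state, of
`-C(q, q̇)ᵀ q̇ + G(q) + F_d q̇`. As `q̇_d` is bounded and `q̇ - q̇_d` is a linear combination of the
components of `z`, the increments `h` and `g` are bounded by polynomials in `Z` without constant
term; the square arises only because `C(q, q̇)ᵀ q̇` is quadratic in the velocity. Convolution with
`f` costs nothing, since `∫₀ᵗ f = 1 - exp (-β t) ≤ 1`.
-/

open scoped NNReal InnerProduct

section ExponentialFilter

variable {E : Type*} [NormedAddCommGroup E] [NormedSpace ℝ E] {β t H K : ℝ} {F h g : ℝ → E}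

theorem integral_mul_exp_neg_mul_sub (β t : ℝ) :
    ∫ σ in (0 : ℝ)..t, β * Real.exp (-β * (t - σ)) = 1 - Real.exp (-β * t) := by
  have hderiv (σ : ℝ) : HasDerivAt (fun σ ↦ Real.exp (-β * (t - σ)))
      (β * Real.exp (-β * (t - σ))) σ :=
    ((((hasDerivAt_id' σ).const_sub t).const_mul (-β)).exp).congr_deriv (by ring)
  rw [intervalIntegral.integral_eq_sub_of_hasDerivAt (fun σ _ ↦ hderiv σ)
    ((by fun_prop : Continuous _).intervalIntegrable _ _)]
  simp

theorem norm_integral_exp_smul_le (hβ : 0 ≤ β) (ht : 0 ≤ t)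
    (hF : ∀ σ ∈ Set.Icc 0 t, ‖F σ‖ ≤ H) :
    ‖∫ σ in (0 : ℝ)..t, (β * Real.exp (-β * (t - σ))) • F σ‖ ≤ (1 - Real.exp (-β * t)) * H := by
  rw [← integral_mul_exp_neg_mul_sub, ← intervalIntegral.integral_mul_const]
  refine intervalIntegral.norm_integral_le_of_norm_le ht (.of_forall fun σ hσ ↦ ?_)
    ((by fun_prop : Continuous _).intervalIntegrable _ _)
  rw [norm_smul, Real.norm_of_nonneg (by positivity)]
  gcongr
  exact hF σ (Set.Ioc_subset_Icc_self hσ)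

/-- The output at time `t` of the filter with impulse response `f t = β * exp (-β * t)` driven by
`ḣ + g`, after integration by parts has removed the derivative of `h`. -/
noncomputable def expFilter (β : ℝ) (h g : ℝ → E) (t : ℝ) : E :=
  (∫ σ in (0 : ℝ)..t, (-β ^ 2 * Real.exp (-β * (t - σ))) • h σ) + β • h t
    - (β * Real.exp (-β * t)) • h 0 + ∫ σ in (0 : ℝ)..t, (β * Real.exp (-β * (t - σ))) • g σ

theorem norm_expFilter_le (hβ : 0 ≤ β) (ht : 0 ≤ t) (hh : ∀ σ ∈ Set.Icc 0 t, ‖h σ‖ ≤ H)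
    (hg : ∀ σ ∈ Set.Icc 0 t, ‖g σ‖ ≤ K) : ‖expFilter β h g t‖ ≤ 2 * β * H + K := by
  have hconv_h : ‖∫ σ in (0 : ℝ)..t, (-β ^ 2 * Real.exp (-β * (t - σ))) • h σ‖ ≤
      (1 - Real.exp (-β * t)) * (β * H) := by
    have hsmul (σ : ℝ) : (-β ^ 2 * Real.exp (-β * (t - σ))) • h σ =
        (β * Real.exp (-β * (t - σ))) • (-β) • h σ := by
      rw [smul_smul]; ring_nf
    simp only [hsmul]
    refine norm_integral_exp_smul_le hβ ht fun σ hσ ↦ ?_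
    rw [norm_smul, norm_neg, Real.norm_of_nonneg hβ]
    gcongr
    exact hh σ hσ
  have hend : ‖β • h t‖ ≤ β * H := by
    rw [norm_smul, Real.norm_of_nonneg hβ]
    gcongr
    exact hh t ⟨ht, le_rfl⟩
  have hstart : ‖(β * Real.exp (-β * t)) • h 0‖ ≤ β * Real.exp (-β * t) * H := by
    rw [norm_smul, Real.norm_of_nonneg (by positivity)]
    gcongr
    exact hh 0 ⟨le_rfl, ht⟩
  have hconv_g : ‖∫ σ in (0 : ℝ)..t, (β * Real.exp (-β * (t - σ))) • g σ‖ ≤ K := by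
    have hK : 0 ≤ K := (norm_nonneg _).trans (hg 0 ⟨le_rfl, ht⟩)
    refine (norm_integral_exp_smul_le hβ ht hg).trans (mul_le_of_le_one_left hK ?_)
    linarith [Real.exp_pos (-β * t)]
  calc ‖expFilter β h g t‖
      ≤ (1 - Real.exp (-β * t)) * (β * H) + β * H + β * Real.exp (-β * t) * H + K :=
        norm_add_le_of_le (norm_sub_le_of_le (norm_add_le_of_le hconv_h hend) hstart) hconv_g
    _ = 2 * β * H + K := by ring

theorem map_expFilter {E' : Type*} [NormedAddCommGroup E'] [NormedSpace ℝ E']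
    (L : E ≃L[ℝ] E') (β : ℝ) (h g : ℝ → E) (t : ℝ) :
    L (expFilter β h g t) = expFilter β (fun σ ↦ L (h σ)) (fun σ ↦ L (g σ)) t := by
  simp only [expFilter, intervalIntegral, map_add, map_sub, map_smul,
    ← ContinuousLinearEquiv.integral_comp_comm]

end ExponentialFilter

section SupErrorNorm

variable {E : Type*} [SeminormedAddCommGroup E]

/-- The quantity `Z t`: the supremum over `[0, t]` of the Euclidean norm of the composite error
`z = (e, e_f, η)`. -/
noncomputable def supErrorNorm (e ef η : ℝ → E) (t : ℝ) : ℝ :=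
  sSup ((fun σ ↦ √(‖e σ‖ ^ 2 + ‖ef σ‖ ^ 2 + ‖η σ‖ ^ 2)) '' Set.Icc 0 t)

theorem norm_le_supErrorNorm {e ef η : ℝ → E} (he : Continuous e) (hef : Continuous ef)
    (hη : Continuous η) {σ t : ℝ} (hσ : σ ∈ Set.Icc 0 t) :
    ‖e σ‖ ≤ supErrorNorm e ef η t ∧ ‖ef σ‖ ≤ supErrorNorm e ef η t ∧
      ‖η σ‖ ≤ supErrorNorm e ef η t := by
  have hbdd : BddAbove ((fun σ ↦ √(‖e σ‖ ^ 2 + ‖ef σ‖ ^ 2 + ‖η σ‖ ^ 2)) '' Set.Icc 0 t) :=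
    (isCompact_Icc.image (by fun_prop)).bddAbove
  have hz := le_csSup hbdd (Set.mem_image_of_mem _ hσ)
  refine ⟨(Real.le_sqrt_of_sq_le ?_).trans hz, (Real.le_sqrt_of_sq_le ?_).trans hz,
    (Real.le_sqrt_of_sq_le ?_).trans hz⟩ <;>
  nlinarith [sq_nonneg ‖e σ‖, sq_nonneg ‖ef σ‖, sq_nonneg ‖η σ‖]

theorem norm_sub_smul_sub_smul_le [NormedSpace ℝ E] {x y z : E} {r : ℝ} (a b : ℝ)
    (hx : ‖x‖ ≤ r) (hy : ‖y‖ ≤ r) (hz : ‖z‖ ≤ r) :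
    ‖x - a • y - b • z‖ ≤ (1 + |a| + |b|) * r :=
  calc ‖x - a • y - b • z‖ ≤ r + |a| * r + |b| * r := by
        refine norm_sub_le_of_le (norm_sub_le_of_le hx ?_) ?_ <;>
        · rw [norm_smul, Real.norm_eq_abs]; gcongr
    _ = (1 + |a| + |b|) * r := by ring

end SupErrorNorm

section OperatorIncrements

variable {E F : Type*}

theorem norm_apply_sub_apply_le [SeminormedAddCommGroup E] [NormedSpace ℝ E]
    [SeminormedAddCommGroup F] [NormedSpace ℝ F] (A B : E →L[ℝ] F) (x y : E) :
    ‖A x - B y‖ ≤ ‖A - B‖ * ‖y‖ + ‖A‖ * ‖x - y‖ := by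
  have hsplit : A x - B y = (A - B) y + A (x - y) := by simp
  rw [hsplit]
  exact norm_add_le_of_le ((A - B).le_opNorm y) (A.le_opNorm (x - y))

variable [NormedAddCommGroup E] [InnerProductSpace ℝ E] [CompleteSpace E]
  [NormedAddCommGroup F] [InnerProductSpace ℝ F] [CompleteSpace F]

theorem norm_adjoint_apply_le {V : Type*} [SeminormedAddCommGroup V] [NormedSpace ℝ V]
    (A : V →L[ℝ] E →L[ℝ] F) (x : V) (v : F) :
    ‖((A x)†) v‖ ≤ ‖A‖ * ‖x‖ * ‖v‖ :=
  calc ‖((A x)†) v‖ ≤ ‖(A x)†‖ * ‖v‖ := ((A x)†).le_opNorm v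
    _ = ‖A x‖ * ‖v‖ := by rw [LinearIsometryEquiv.norm_map]
    _ ≤ ‖A‖ * ‖x‖ * ‖v‖ := by gcongr; exact A.le_opNorm x

theorem norm_adjoint_apply_self_sub_le (A B : F →L[ℝ] E →L[ℝ] F) (x y : F) :
    ‖((A x)†) x - ((B y)†) y‖ ≤
      ‖A - B‖ * ‖y‖ ^ 2 + ‖A‖ * (2 * ‖y‖ * ‖x - y‖ + ‖x - y‖ ^ 2) := by
  have hsplit : ((A x)†) x - ((B y)†) y = (((A - B) y)†) y + ((A y)†) (x - y)
      + ((A (x - y))†) y + ((A (x - y))†) (x - y) := by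
    simp only [_root_.sub_apply, map_sub]
    abel
  calc ‖((A x)†) x - ((B y)†) y‖
      ≤ ‖A - B‖ * ‖y‖ * ‖y‖ + ‖A‖ * ‖y‖ * ‖x - y‖ + ‖A‖ * ‖x - y‖ * ‖y‖
          + ‖A‖ * ‖x - y‖ * ‖x - y‖ := by
        rw [hsplit]
        refine norm_add_le_of_le (norm_add_le_of_le (norm_add_le_of_le ?_ ?_) ?_) ?_ <;>
        exact norm_adjoint_apply_le ..
    _ = ‖A - B‖ * ‖y‖ ^ 2 + ‖A‖ * (2 * ‖y‖ * ‖x - y‖ + ‖x - y‖ ^ 2) := by ring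

end OperatorIncrements

/-- The coefficients of the dynamics `M(q) q̈ + C(q, q̇) q̇ + G(q) + F_d q̇ = τ` on a normed space.
The linearity of `C` in its second argument is built into the type of `coriolis`. -/
structure RobotDynamics (E : Type*) [NormedAddCommGroup E] [NormedSpace ℝ E] where
  inertia : E → E →L[ℝ] E
  coriolis : E → E →L[ℝ] E →L[ℝ] E
  gravity : E → E
  friction : E →L[ℝ] E

/-- The bounding constants `m₂, ζ_{M1}, ζ_{C1}, ζ_{C2}, ζ_G, ζ_F` of `RobotDynamics`. -/
structure DynamicsBounds where
  m₂ : ℝ≥0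
  ζM1 : ℝ≥0
  ζC1 : ℝ≥0
  ζC2 : ℝ≥0
  ζG : ℝ≥0
  ζF : ℝ≥0

namespace DynamicsBounds

/-- The coefficient `ξ₄` of `Z`, where the desired velocity is bounded by `v` and the velocity error
by `c * Z`. -/
def linearGain (K : DynamicsBounds) (β c : ℝ) (v : ℝ≥0) : ℝ :=
  2 * β * (K.ζM1 * v + K.m₂ * c) + (K.ζC2 * v ^ 2 + 2 * K.ζC1 * v * c + K.ζG + K.ζF * c)

/-- The coefficient `ξ₅` of `Z ^ 2`, where the velocity error is bounded by `c * Z`. -/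
def quadraticGain (K : DynamicsBounds) (c : ℝ) : ℝ := K.ζC1 * c ^ 2

variable (K : DynamicsBounds) {β c : ℝ}

theorem linearGain_nonneg (hβ : 0 ≤ β) (hc : 0 ≤ c) (v : ℝ≥0) : 0 ≤ K.linearGain β c v := by
  unfold linearGain; positivity

theorem quadraticGain_nonneg (c : ℝ) : 0 ≤ K.quadraticGain c := by
  unfold quadraticGain; positivity

end DynamicsBounds

namespace RobotDynamics

/-- The dynamics `D` obeys the norm and Lipschitz bounds with the constants `K`. -/
structure IsBoundedBy {E : Type*} [NormedAddCommGroup E] [NormedSpace ℝ E]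
    (D : RobotDynamics E) (K : DynamicsBounds) : Prop where
  norm_inertia_le : ∀ a, ‖D.inertia a‖ ≤ K.m₂
  lipschitzWith_inertia : LipschitzWith K.ζM1 D.inertia
  norm_coriolis_le : ∀ a, ‖D.coriolis a‖ ≤ K.ζC1
  lipschitzWith_coriolis : LipschitzWith K.ζC2 D.coriolis
  lipschitzWith_gravity : LipschitzWith K.ζG D.gravity
  norm_friction_le : ‖D.friction‖ ≤ K.ζF

section Momentum

variable {E : Type*} [NormedAddCommGroup E] [NormedSpace ℝ E]

/-- The mismatch `h = M(a) x - M(b) y` of the momenta at the states `(a, x)` and `(b, y)`. -/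
def momentumMismatch (D : RobotDynamics E) (a x b y : E) : E :=
  D.inertia a x - D.inertia b y

theorem IsBoundedBy.norm_momentumMismatch_le {D : RobotDynamics E} {K : DynamicsBounds}
    {a b x y : E} {c Z : ℝ} {v : ℝ≥0} (hD : D.IsBoundedBy K) (hab : ‖a - b‖ ≤ Z)
    (hxy : ‖x - y‖ ≤ c * Z) (hy : ‖y‖ ≤ v) :
    ‖D.momentumMismatch a x b y‖ ≤ (K.ζM1 * v + K.m₂ * c) * Z :=
  calc ‖D.momentumMismatch a x b y‖
      ≤ ‖D.inertia a - D.inertia b‖ * ‖y‖ + ‖D.inertia a‖ * ‖x - y‖ :=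
        norm_apply_sub_apply_le ..
    _ ≤ K.ζM1 * Z * v + K.m₂ * (c * Z) := by
        gcongr
        · have hZ : 0 ≤ Z := (norm_nonneg _).trans hab
          positivity
        · exact hD.lipschitzWith_inertia.norm_sub_le_of_le hab
        · exact hD.norm_inertia_le a
    _ = (K.ζM1 * v + K.m₂ * c) * Z := by ring

end Momentum

variable {E : Type*} [NormedAddCommGroup E] [InnerProductSpace ℝ E] [CompleteSpace E]

/-- The mismatch `g` at the states `(a, x)` and `(b, y)` of the forces `-Ṁ q̇ + C q̇ + G + F_d q̇`,
where `C + C†` stands for `Ṁ`. -/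
noncomputable def forceMismatch (D : RobotDynamics E) (a x b y : E) : E :=
  -(D.coriolis a x + (D.coriolis a x)†) x + (D.coriolis b y + (D.coriolis b y)†) y
    + D.coriolis a x x - D.coriolis b y y + D.gravity a - D.gravity b + D.friction (x - y)

/-- The signal `Ω` of the actual trajectory `q` and the desired trajectory `qd`, whose velocities
are `q'` and `qd'`. -/
noncomputable def filteredMismatch (D : RobotDynamics E) (β : ℝ) (q q' qd qd' : ℝ → E) :
    ℝ → E :=
  expFilter β (fun σ ↦ D.momentumMismatch (q σ) (q' σ) (qd σ) (qd' σ))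
    fun σ ↦ D.forceMismatch (q σ) (q' σ) (qd σ) (qd' σ)

theorem forceMismatch_eq (D : RobotDynamics E) (a x b y : E) :
    D.forceMismatch a x b y = -(((D.coriolis a x)†) x - ((D.coriolis b y)†) y)
      + (D.gravity a - D.gravity b) + D.friction (x - y) := by
  simp only [forceMismatch, _root_.add_apply]
  abel

theorem IsBoundedBy.norm_forceMismatch_le {D : RobotDynamics E} {K : DynamicsBounds}
    {a b x y : E} {c Z : ℝ} {v : ℝ≥0} (hD : D.IsBoundedBy K) (hab : ‖a - b‖ ≤ Z)
    (hxy : ‖x - y‖ ≤ c * Z) (hy : ‖y‖ ≤ v) :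
    ‖D.forceMismatch a x b y‖ ≤
      (K.ζC2 * v ^ 2 + 2 * K.ζC1 * v * c + K.ζG + K.ζF * c) * Z + K.ζC1 * c ^ 2 * Z ^ 2 := by
  have hZ : 0 ≤ Z := (norm_nonneg _).trans hab
  have hcoriolis : ‖((D.coriolis a x)†) x - ((D.coriolis b y)†) y‖ ≤
      K.ζC2 * Z * v ^ 2 + K.ζC1 * (2 * v * (c * Z) + (c * Z) ^ 2) := by
    refine (norm_adjoint_apply_self_sub_le ..).trans ?_
    gcongr
    · exact hD.lipschitzWith_coriolis.norm_sub_le_of_le hab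
    · exact hD.norm_coriolis_le a
  have hfriction : ‖D.friction (x - y)‖ ≤ K.ζF * (c * Z) :=
    D.friction.le_of_opNorm_le_of_le hD.norm_friction_le hxy
  calc ‖D.forceMismatch a x b y‖
      ≤ K.ζC2 * Z * v ^ 2 + K.ζC1 * (2 * v * (c * Z) + (c * Z) ^ 2) + K.ζG * Z
          + K.ζF * (c * Z) := by
        rw [forceMismatch_eq]
        exact norm_add_le_of_le (norm_add_le_of_le ((norm_neg _).trans_le hcoriolis)
          (hD.lipschitzWith_gravity.norm_sub_le_of_le hab)) hfriction
    _ = _ := by ring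

end RobotDynamics

theorem appendix_lemma_ofb_general {E : Type*} [NormedAddCommGroup E] [InnerProductSpace ℝ E]
    [CompleteSpace E] {D : RobotDynamics E} {K : DynamicsBounds} (hD : D.IsBoundedBy K)
    {β α₁ α₂ : ℝ} {v : ℝ≥0} (hβ : 0 ≤ β) {q q' qd qd' ef η : ℝ → E}
    (hq : ∀ t, HasDerivAt q (q' t) t) (hqd : ∀ t, HasDerivAt qd (qd' t) t)
    (hef : Continuous ef) (hη : Continuous η) (hqd' : ∀ t, 0 ≤ t → ‖qd' t‖ ≤ v)
    (he : ∀ t, qd' t - q' t = η t - α₁ • (qd t - q t) - α₂ • ef t) {t : ℝ} (ht : 0 ≤ t) :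
    ‖D.filteredMismatch β q q' qd qd' t‖ ≤
      K.linearGain β (1 + |α₁| + |α₂|) v * supErrorNorm (fun σ ↦ qd σ - q σ) ef η t
        + K.quadraticGain (1 + |α₁| + |α₂|) * supErrorNorm (fun σ ↦ qd σ - q σ) ef η t ^ 2 := by
  have hcont : Continuous fun σ ↦ qd σ - q σ :=
    continuous_iff_continuousAt.2 fun σ ↦ ((hqd σ).sub (hq σ)).continuousAt
  have herror (σ : ℝ) (hσ : σ ∈ Set.Icc 0 t) := norm_le_supErrorNorm hcont hef hη hσ
  set Z := supErrorNorm (fun σ ↦ qd σ - q σ) ef η t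
  have hposition (σ : ℝ) (hσ : σ ∈ Set.Icc 0 t) : ‖q σ - qd σ‖ ≤ Z := by
    rw [norm_sub_rev]
    exact (herror σ hσ).1
  have hvelocity (σ : ℝ) (hσ : σ ∈ Set.Icc 0 t) :
      ‖q' σ - qd' σ‖ ≤ (1 + |α₁| + |α₂|) * Z := by
    obtain ⟨he_le, hef_le, hη_le⟩ := herror σ hσ
    rw [norm_sub_rev, he]
    exact norm_sub_smul_sub_smul_le α₁ α₂ hη_le he_le hef_le
  refine (norm_expFilter_le hβ ht
    (fun σ hσ ↦ hD.norm_momentumMismatch_le (hposition σ hσ) (hvelocity σ hσ) (hqd' σ hσ.1))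
    fun σ hσ ↦ hD.norm_forceMismatch_le (hposition σ hσ) (hvelocity σ hσ) (hqd' σ hσ.1)).trans_eq ?_
  simp only [DynamicsBounds.linearGain, DynamicsBounds.quadraticGain]
  ring

theorem eunorm_eq_norm_toLp {n : ℕ} (v : Fin n → ℝ) : eunorm v = ‖WithLp.toLp 2 v‖ := by
  simp [eunorm, EuclideanSpace.norm_eq]

section Matrix

open WithLp

variable {ι : Type*} [Fintype ι] [DecidableEq ι]

theorem toEuclideanCLM_transpose (A : Matrix ι ι ℝ) :
    toEuclideanCLM (𝕜 := ℝ) Aᵀ = (toEuclideanCLM (𝕜 := ℝ) A)† := by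
  rw [← conjTranspose_eq_transpose_of_trivial, ← star_eq_conjTranspose, map_star,
    ContinuousLinearMap.star_eq_adjoint]

theorem norm_toEuclideanCLM_le {A : Matrix ι ι ℝ} {r : ℝ} (hr : 0 ≤ r)
    (hA : ∀ v, ‖toLp 2 (A *ᵥ v)‖ ≤ r * ‖toLp 2 v‖) :
    ‖toEuclideanCLM (𝕜 := ℝ) A‖ ≤ r :=
  ContinuousLinearMap.opNorm_le_bound _ hr fun v ↦ hA v.ofLp

namespace RobotDynamics

/-- The dynamics on Euclidean space whose coefficients are given by matrices. -/
noncomputable def ofMatrix (M : (ι → ℝ) → Matrix ι ι ℝ) {C : (ι → ℝ) → (ι → ℝ) → Matrix ι ι ℝ}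
    (hC : ∀ a, IsLinearMap ℝ (C a)) (G : (ι → ℝ) → ι → ℝ) (Fd : Matrix ι ι ℝ) :
    RobotDynamics (EuclideanSpace ℝ ι) where
  inertia a := toEuclideanCLM (𝕜 := ℝ) (M a.ofLp)
  coriolis a := LinearMap.toContinuousLinearMap
    { toFun := fun w ↦ toEuclideanCLM (𝕜 := ℝ) (C a.ofLp w.ofLp)
      map_add' := fun w w' ↦ by rw [ofLp_add, (hC _).map_add, map_add]
      map_smul' := fun r w ↦ by rw [ofLp_smul, (hC _).map_smul, map_smul, RingHom.id_apply] }
  gravity a := toLp 2 (G a.ofLp)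
  friction := toEuclideanCLM (𝕜 := ℝ) Fd

variable {M : (ι → ℝ) → Matrix ι ι ℝ} {C : (ι → ℝ) → (ι → ℝ) → Matrix ι ι ℝ}
  {G : (ι → ℝ) → ι → ℝ} {Fd : Matrix ι ι ℝ}

theorem coriolis_ofMatrix_apply (hC : ∀ a, IsLinearMap ℝ (C a)) (a w : EuclideanSpace ℝ ι) :
    (ofMatrix M hC G Fd).coriolis a w = toEuclideanCLM (𝕜 := ℝ) (C a.ofLp w.ofLp) := rfl

theorem isBoundedBy_ofMatrix (hC : ∀ a, IsLinearMap ℝ (C a)) {m₂ ζM1 ζC1 ζC2 ζG ζF : ℝ}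
    (hM_le : ∀ a v, ‖toLp 2 (M a *ᵥ v)‖ ≤ m₂ * ‖toLp 2 v‖)
    (hM_sub : ∀ a b v, ‖toLp 2 ((M a - M b) *ᵥ v)‖ ≤
      ζM1 * ‖toLp 2 (a - b)‖ * ‖toLp 2 v‖)
    (hC_le : ∀ a w v, ‖toLp 2 (C a w *ᵥ v)‖ ≤
      ζC1 * ‖toLp 2 w‖ * ‖toLp 2 v‖)
    (hC_sub : ∀ a b w v, ‖toLp 2 ((C a w - C b w) *ᵥ v)‖ ≤
      ζC2 * ‖toLp 2 (a - b)‖ * ‖toLp 2 w‖ * ‖toLp 2 v‖)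
    (hG : ∀ a b, ‖toLp 2 (G a - G b)‖ ≤ ζG * ‖toLp 2 (a - b)‖)
    (hFd : ∀ v, ‖toLp 2 (Fd *ᵥ v)‖ ≤ ζF * ‖toLp 2 v‖) :
    (ofMatrix M hC G Fd).IsBoundedBy ⟨m₂.toNNReal, ζM1.toNNReal, ζC1.toNNReal, ζC2.toNNReal,
      ζG.toNNReal, ζF.toNNReal⟩ where
  norm_inertia_le a := norm_toEuclideanCLM_le (by positivity) fun v ↦ (hM_le _ v).trans <| by
    gcongr
    exact m₂.le_coe_toNNReal
  lipschitzWith_inertia := .of_dist_le_mul fun a b ↦ by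
    rw [dist_eq_norm, dist_eq_norm, ofMatrix, ← map_sub]
    refine norm_toEuclideanCLM_le (by positivity) fun v ↦ (hM_sub _ _ v).trans ?_
    rw [toLp_sub, toLp_ofLp, toLp_ofLp]
    gcongr
    exact ζM1.le_coe_toNNReal
  norm_coriolis_le a := ContinuousLinearMap.opNorm_le_bound _ (by positivity) fun w ↦
    norm_toEuclideanCLM_le (by positivity) fun v ↦ (hC_le _ _ v).trans <| by
      rw [toLp_ofLp]
      gcongr
      exact ζC1.le_coe_toNNReal
  lipschitzWith_coriolis := .of_dist_le_mul fun a b ↦ by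
    rw [dist_eq_norm, dist_eq_norm]
    refine ContinuousLinearMap.opNorm_le_bound _ (by positivity) fun w ↦ ?_
    rw [_root_.sub_apply, coriolis_ofMatrix_apply, coriolis_ofMatrix_apply, ← map_sub]
    refine norm_toEuclideanCLM_le (by positivity) fun v ↦ (hC_sub _ _ _ v).trans ?_
    rw [toLp_sub, toLp_ofLp, toLp_ofLp, toLp_ofLp]
    gcongr
    exact ζC2.le_coe_toNNReal
  lipschitzWith_gravity := .of_dist_le_mul fun a b ↦ by
    rw [dist_eq_norm, dist_eq_norm, ofMatrix, ← toLp_sub]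
    refine (hG _ _).trans ?_
    rw [toLp_sub, toLp_ofLp, toLp_ofLp]
    gcongr
    exact ζG.le_coe_toNNReal
  norm_friction_le := norm_toEuclideanCLM_le (by positivity) fun v ↦ (hFd v).trans <| by
    gcongr
    exact ζF.le_coe_toNNReal

theorem forceMismatch_ofMatrix (hC : ∀ a, IsLinearMap ℝ (C a)) (a x b y : ι → ℝ) :
    (ofMatrix M hC G Fd).forceMismatch (toLp 2 a) (toLp 2 x) (toLp 2 b) (toLp 2 y) =
      toLp 2 (-((C a x + (C a x)ᵀ) *ᵥ x) + (C b y + (C b y)ᵀ) *ᵥ y + C a x *ᵥ x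
        - C b y *ᵥ y + G a - G b + Fd *ᵥ (x - y)) := by
  simp only [forceMismatch, coriolis_ofMatrix_apply, ← toEuclideanCLM_transpose, ← map_add]
  rfl

theorem filteredMismatch_ofMatrix (hC : ∀ a, IsLinearMap ℝ (C a)) (β : ℝ)
    (q q' qd qd' : ℝ → ι → ℝ) (t : ℝ) :
    (ofMatrix M hC G Fd).filteredMismatch β (fun σ ↦ toLp 2 (q σ)) (fun σ ↦ toLp 2 (q' σ))
        (fun σ ↦ toLp 2 (qd σ)) (fun σ ↦ toLp 2 (qd' σ)) t =
      toLp 2 (expFilter β (fun σ ↦ M (q σ) *ᵥ q' σ - M (qd σ) *ᵥ qd' σ)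
        (fun σ ↦ -((C (q σ) (q' σ) + (C (q σ) (q' σ))ᵀ) *ᵥ q' σ)
          + (C (qd σ) (qd' σ) + (C (qd σ) (qd' σ))ᵀ) *ᵥ qd' σ + C (q σ) (q' σ) *ᵥ q' σ
          - C (qd σ) (qd' σ) *ᵥ qd' σ + G (q σ) - G (qd σ) + Fd *ᵥ (q' σ - qd' σ)) t) := by
  simp only [filteredMismatch, forceMismatch_ofMatrix]
  exact (map_expFilter (EuclideanSpace.equiv ι ℝ).symm β _ _ t).symm

end RobotDynamics

end Matrix

/-- Appendix Lemma, output-feedback version. If `e_f, η` are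
continuous functions with `ė = η - α₁ e - α₂ e_f` for constants `α₁, α₂ > 0`,
and `z = (e, e_f, η)`, then there exist nonnegative constants `ξ₄, ξ₅`,
depending only on `β`, `α₁`, `α₂` and the bounding constants
`m₂, ζM1, ζC1, ζC2, ζG, ζF, ζd1`, such that for every `t ≥ 0`,
`‖Ω(t)‖ ≤ ξ₄ Z(t) + ξ₅ Z(t)²` where `Z(t) = sup_{0≤σ≤t} ‖z(σ)‖`. -/
theorem appendix_lemma_ofb
    (β α₁ α₂ m₂ ζM1 ζC1 ζC2 ζG ζF ζd1 : ℝ)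
    (hβ : 0 < β) (hα₁ : 0 < α₁) (hα₂ : 0 < α₂) :
    ∃ ξ₄ ξ₅ : ℝ, 0 ≤ ξ₄ ∧ 0 ≤ ξ₅ ∧
      ∀ (n : ℕ) (q qd q' qd' ef η : ℝ → Fin n → ℝ)
        (Mm : (Fin n → ℝ) → Matrix (Fin n) (Fin n) ℝ)
        (Cc : (Fin n → ℝ) → (Fin n → ℝ) → Matrix (Fin n) (Fin n) ℝ)
        (G : (Fin n → ℝ) → Fin n → ℝ)
        (Fd : Matrix (Fin n) (Fin n) ℝ)
        (Ω : ℝ → Fin n → ℝ),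
        -- trajectories and their derivatives
        (∀ t, HasDerivAt q (q' t) t) → (∀ t, HasDerivAt qd (qd' t) t) →
        Continuous q' → Continuous qd' →
        -- surrogate signals are continuous
        Continuous ef → Continuous η →
        -- initial rest conditions
        q' 0 = 0 → qd' 0 = 0 →
        -- bounded desired velocity
        (∀ t, 0 ≤ t → eunorm (qd' t) ≤ ζd1) →
        -- ė = η - α₁ e - α₂ e_f, with e = q_d - q
        (∀ t, qd' t - q' t = η t - α₁ • (qd t - q t) - α₂ • ef t) →
        -- induced-norm bounds on the dynamic terms
        (∀ a v, eunorm ((Mm a).mulVec v) ≤ m₂ * eunorm v) →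
        (∀ a b v, eunorm ((Mm a - Mm b).mulVec v) ≤ ζM1 * eunorm (a - b) * eunorm v) →
        (∀ a w v, eunorm ((Cc a w).mulVec v) ≤ ζC1 * eunorm w * eunorm v) →
        (∀ a b w v, eunorm ((Cc a w - Cc b w).mulVec v) ≤
          ζC2 * eunorm (a - b) * eunorm w * eunorm v) →
        -- C is linear in its second argument and satisfies the switching property
        (∀ a, IsLinearMap ℝ (Cc a)) →
        (∀ a ν ξ, (Cc a ν).mulVec ξ = (Cc a ξ).mulVec ν) →
        (∀ a b, eunorm (G a - G b) ≤ ζG * eunorm (a - b)) →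
        (∀ v, eunorm (Fd.mulVec v) ≤ ζF * eunorm v) →
        -- (d/dt)[M(q(t))] = C(q, q̇) + C(q, q̇)ᵀ along any C¹ curve
        (∀ (c c' : ℝ → Fin n → ℝ), (∀ s, HasDerivAt c (c' s) s) →
          ∀ s i j, HasDerivAt (fun u => Mm (c u) i j)
            ((Cc (c s) (c' s) + (Cc (c s) (c' s))ᵀ) i j) s) →
        -- definition of Ω via the filter f(t) = β exp(-βt):
        -- Ω(t) = ∫₀ᵗ f'(t-σ) h(σ) dσ + f(0) h(t) - f(t) h(0) + ∫₀ᵗ f(t-σ) g(σ) dσ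
        (∀ t, Ω t =
          (∫ σ in (0:ℝ)..t, (-β ^ 2 * Real.exp (-β * (t - σ))) •
              ((Mm (q σ)).mulVec (q' σ) - (Mm (qd σ)).mulVec (qd' σ)))
          + β • ((Mm (q t)).mulVec (q' t) - (Mm (qd t)).mulVec (qd' t))
          - (β * Real.exp (-β * t)) •
              ((Mm (q 0)).mulVec (q' 0) - (Mm (qd 0)).mulVec (qd' 0))
          + ∫ σ in (0:ℝ)..t, (β * Real.exp (-β * (t - σ))) •
              (-((Cc (q σ) (q' σ) + (Cc (q σ) (q' σ))ᵀ).mulVec (q' σ))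
                + (Cc (qd σ) (qd' σ) + (Cc (qd σ) (qd' σ))ᵀ).mulVec (qd' σ)
                + (Cc (q σ) (q' σ)).mulVec (q' σ)
                - (Cc (qd σ) (qd' σ)).mulVec (qd' σ)
                + G (q σ) - G (qd σ) + Fd.mulVec (q' σ - qd' σ))) →
        -- conclusion, with Z(t) = sup_{0≤σ≤t} ‖(e(σ), e_f(σ), η(σ))‖
        ∀ t, 0 ≤ t →
          eunorm (Ω t) ≤
            ξ₄ * sSup ((fun σ => Real.sqrt ((eunorm (qd σ - q σ)) ^ 2 +
                  (eunorm (ef σ)) ^ 2 + (eunorm (η σ)) ^ 2)) '' Set.Icc 0 t)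
            + ξ₅ * (sSup ((fun σ => Real.sqrt ((eunorm (qd σ - q σ)) ^ 2 +
                  (eunorm (ef σ)) ^ 2 + (eunorm (η σ)) ^ 2)) '' Set.Icc 0 t)) ^ 2 := by
  have hc : 0 ≤ 1 + |α₁| + |α₂| := by positivity
  let K : DynamicsBounds := ⟨m₂.toNNReal, ζM1.toNNReal, ζC1.toNNReal, ζC2.toNNReal, ζG.toNNReal,
    ζF.toNNReal⟩
  refine ⟨K.linearGain β (1 + |α₁| + |α₂|) ζd1.toNNReal, K.quadraticGain (1 + |α₁| + |α₂|),
    K.linearGain_nonneg hβ.le hc _, K.quadraticGain_nonneg _, ?_⟩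
  simp only [eunorm_eq_norm_toLp]
  intro n q qd q' qd' ef η M C G Fd Ω hq hqd _ _ hef hη _ _ hqd' he hM_le hM_sub hC_le hC_sub hC _
    hG hFd _ hΩ t ht
  have hD := RobotDynamics.isBoundedBy_ofMatrix hC hM_le hM_sub hC_le hC_sub hG hFd
  have hderiv {p p' : ℝ → Fin n → ℝ} (hp : ∀ s, HasDerivAt p (p' s) s) (s : ℝ) :
      HasDerivAt (fun σ ↦ WithLp.toLp 2 (p σ)) (WithLp.toLp 2 (p' s)) s :=
    (PiLp.hasFDerivAt_toLp 2 _).comp_hasDerivAt s (hp s)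
  have hbound := appendix_lemma_ofb_general hD hβ.le (hderiv hq) (hderiv hqd)
    ((PiLp.continuous_toLp 2 _).comp hef) ((PiLp.continuous_toLp 2 _).comp hη)
    (fun s hs ↦ (hqd' s hs).trans ζd1.le_coe_toNNReal)
    (fun s ↦ congrArg (WithLp.toLp 2) (he s)) ht
  rw [RobotDynamics.filteredMismatch_ofMatrix] at hbound
  rw [hΩ t]
  exact hbound
end
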